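/- Almost surely, τ̂^{(1)}_{1,2|Z=z} takes values in the interval [−1, 1 − 2 s_n(z)], τ̂^{(2)}_{1,2|Z=z} takes values in [−1 + s_n(z), 1 − s_n(z)], and τ̂^{(3)}_{1,2|Z=z} takes values in [−1 + 2 s_n(z), 1], where s_n(z) = Σ_{i=1}^n w_{i,n}(z)². -/

import Mathlib

open MeasureTheory ProbabilityTheory Filter Real
open scoped ENNReal NNReal BigOperators

noncomputable section

/-- Rescaled kernel `K_h(u) = h^{-p} K(u/h)`. -/
def kh (p : ℕ) (K : (Fin p → ℝ) → ℝ) (h : ℝ) (u : Fin p → ℝ) : ℝ :=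
  (h ^ p)⁻¹ * K (h⁻¹ • u)

/-- Nadaraya-Watson weights `w_{i,n}(z)`. -/
def nwWeight (p n : ℕ) {Ω : Type*} (K : (Fin p → ℝ) → ℝ) (h : ℝ)
    (Z : Fin n → Ω → (Fin p → ℝ)) (i : Fin n) (z : Fin p → ℝ) (ω : Ω) : ℝ :=
  kh p K h (Z i ω - z) / ∑ j : Fin n, kh p K h (Z j ω - z)

/-- The estimator `τ̂⁽¹⁾_{1,2|Z=z}`. -/
def tauHat1 (p n : ℕ) {Ω : Type*} (K : (Fin p → ℝ) → ℝ) (h : ℝ)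
    (X : Fin n → Ω → ℝ × ℝ) (Z : Fin n → Ω → (Fin p → ℝ)) (z : Fin p → ℝ) (ω : Ω) : ℝ :=
  4 * ∑ i : Fin n, ∑ j : Fin n, nwWeight p n K h Z i z ω * nwWeight p n K h Z j z ω *
    (if (X i ω).1 < (X j ω).1 ∧ (X i ω).2 < (X j ω).2 then (1 : ℝ) else 0) - 1

/-- The estimator `τ̂⁽²⁾_{1,2|Z=z}`. -/
def tauHat2 (p n : ℕ) {Ω : Type*} (K : (Fin p → ℝ) → ℝ) (h : ℝ)
    (X : Fin n → Ω → ℝ × ℝ) (Z : Fin n → Ω → (Fin p → ℝ)) (z : Fin p → ℝ) (ω : Ω) : ℝ :=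
  ∑ i : Fin n, ∑ j : Fin n, nwWeight p n K h Z i z ω * nwWeight p n K h Z j z ω *
    ((if 0 < ((X i ω).1 - (X j ω).1) * ((X i ω).2 - (X j ω).2) then (1 : ℝ) else 0)
      - (if ((X i ω).1 - (X j ω).1) * ((X i ω).2 - (X j ω).2) < 0 then (1 : ℝ) else 0))

/-- The estimator `τ̂⁽³⁾_{1,2|Z=z}`. -/
def tauHat3 (p n : ℕ) {Ω : Type*} (K : (Fin p → ℝ) → ℝ) (h : ℝ)
    (X : Fin n → Ω → ℝ × ℝ) (Z : Fin n → Ω → (Fin p → ℝ)) (z : Fin p → ℝ) (ω : Ω) : ℝ :=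
  1 - 4 * ∑ i : Fin n, ∑ j : Fin n, nwWeight p n K h Z i z ω * nwWeight p n K h Z j z ω *
    (if (X i ω).1 < (X j ω).1 ∧ (X j ω).2 < (X i ω).2 then (1 : ℝ) else 0)

/-- `s_n(z) = Σ_i w_{i,n}(z)²`. -/
def sn (p n : ℕ) {Ω : Type*} (K : (Fin p → ℝ) → ℝ) (h : ℝ)
    (Z : Fin n → Ω → (Fin p → ℝ)) (z : Fin p → ℝ) (ω : Ω) : ℝ :=
  ∑ i : Fin n, (nwWeight p n K h Z i z ω) ^ 2

/-! Once the weights sum to one, the pairs `i ≠ j` carry total mass `1 - s_n` in the double sums,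
and a pair `i = j` contributes nothing. In `τ̂⁽¹⁾` and `τ̂⁽³⁾` at most one of `(i, j)` and `(j, i)`
is counted, so their double sums lie in `[0, (1 - s_n) / 2]`; in `τ̂⁽²⁾` each pair enters with a
coefficient of absolute value at most one. -/

section WeightedVStat

variable {ι R : Type*} [Fintype ι]

/-- The weighted V-statistic of order two with kernel `f` and weights `w`, not normalized by the
total weight. The three estimators of Kendall's tau are affine functions of such statistics. -/
def weightedVStat [CommSemiring R] (w : ι → R) (f : ι → ι → R) : R :=
  ∑ i, ∑ j, w i * w j * f i j

theorem weightedVStat_add [CommSemiring R] (w : ι → R) (f g : ι → ι → R) :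
    weightedVStat w (f + g) = weightedVStat w f + weightedVStat w g := by
  simp only [weightedVStat, Pi.add_apply, mul_add, Finset.sum_add_distrib]

theorem weightedVStat_swap [CommSemiring R] (w : ι → R) (f : ι → ι → R) :
    weightedVStat w (Function.swap f) = weightedVStat w f := by
  simp only [weightedVStat, Function.swap]
  rw [Finset.sum_comm]
  simp only [mul_comm]

theorem weightedVStat_neg [CommRing R] (w : ι → R) (f : ι → ι → R) :
    weightedVStat w (-f) = -weightedVStat w f := by
  simp only [weightedVStat, Pi.neg_apply, mul_neg, Finset.sum_neg_distrib]

theorem weightedVStat_ite_eq [CommRing R] [DecidableEq ι] (w : ι → R) :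
    weightedVStat w (fun i j => if i = j then 0 else 1) = (∑ i, w i) ^ 2 - ∑ i, w i ^ 2 := by
  have split_diag (i j : ι) : w i * w j * (if i = j then 0 else 1) =
      w i * w j - if i = j then w i * w j else 0 := by
    split_ifs <;> ring
  simp only [weightedVStat, split_diag, Finset.sum_sub_distrib, Finset.sum_ite_eq,
    Finset.mem_univ, if_true, sq, Finset.sum_mul_sum]

section OrderedSemiring

variable [CommSemiring R] [PartialOrder R] [IsOrderedRing R] {w : ι → R}

theorem weightedVStat_mono (hw : ∀ i, 0 ≤ w i) {f g : ι → ι → R} (hfg : ∀ i j, f i j ≤ g i j) :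
    weightedVStat w f ≤ weightedVStat w g :=
  Finset.sum_le_sum fun i _ => Finset.sum_le_sum fun j _ =>
    mul_le_mul_of_nonneg_left (hfg i j) (mul_nonneg (hw i) (hw j))

theorem weightedVStat_ite_nonneg (hw : ∀ i, 0 ≤ w i) (r : ι → ι → Prop) [DecidableRel r] :
    0 ≤ weightedVStat w (fun i j => if r i j then 1 else 0) :=
  Finset.sum_nonneg fun i _ => Finset.sum_nonneg fun j _ =>
    mul_nonneg (mul_nonneg (hw i) (hw j)) (ite_nonneg zero_le_one le_rfl)

end OrderedSemiring

section OrderedRing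

variable [CommRing R] [PartialOrder R] [IsOrderedRing R] {w : ι → R}

theorem weightedVStat_le_of_diag_nonpos {f : ι → ι → R} (hw : ∀ i, 0 ≤ w i)
    (hdiag : ∀ i, f i i ≤ 0) (hf : ∀ i j, i ≠ j → f i j ≤ 1) :
    weightedVStat w f ≤ (∑ i, w i) ^ 2 - ∑ i, w i ^ 2 := by
  classical
  rw [← weightedVStat_ite_eq]
  refine weightedVStat_mono hw fun i j => ?_
  split_ifs with hij
  · exact hij ▸ hdiag i
  · exact hf i j hij

theorem two_mul_weightedVStat_le_of_asymm (hw : ∀ i, 0 ≤ w i) (r : ι → ι → Prop)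
    [DecidableRel r] (hr : ∀ i j, r i j → ¬ r j i) :
    2 * weightedVStat w (fun i j => if r i j then 1 else 0) ≤
      (∑ i, w i) ^ 2 - ∑ i, w i ^ 2 := by
  set f : ι → ι → R := fun i j => if r i j then 1 else 0
  have irrefl (i : ι) : ¬ r i i := fun h => hr i i h h
  have symmetrized_le_one (i j : ι) : (f + Function.swap f) i j ≤ 1 := by
    by_cases hij : r i j
    · simp [f, Function.swap, hij, hr i j hij]
    · by_cases hji : r j i <;> simp [f, Function.swap, hij, hji]
  calc 2 * weightedVStat w f = weightedVStat w (f + Function.swap f) := by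
        rw [weightedVStat_add, weightedVStat_swap, two_mul]
    _ ≤ (∑ i, w i) ^ 2 - ∑ i, w i ^ 2 :=
        weightedVStat_le_of_diag_nonpos hw (fun i => by simp [f, Function.swap, irrefl i])
          fun i j _ => symmetrized_le_one i j

end OrderedRing

theorem abs_weightedVStat_le [CommRing R] [LinearOrder R] [IsOrderedRing R] {w : ι → R}
    {f : ι → ι → R} (hw : ∀ i, 0 ≤ w i) (hdiag : ∀ i, f i i = 0)
    (hf : ∀ i j, i ≠ j → |f i j| ≤ 1) :
    |weightedVStat w f| ≤ (∑ i, w i) ^ 2 - ∑ i, w i ^ 2 := by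
  refine abs_le'.2 ⟨?_, ?_⟩
  · exact weightedVStat_le_of_diag_nonpos hw (fun i => (hdiag i).le)
      fun i j hij => (abs_le'.1 (hf i j hij)).1
  · rw [← weightedVStat_neg]
    exact weightedVStat_le_of_diag_nonpos hw (fun i => neg_nonpos.2 (hdiag i).ge)
      fun i j hij => (abs_le'.1 (hf i j hij)).2

end WeightedVStat

section Estimators

variable {Ω : Type*} {p n : ℕ} {K : (Fin p → ℝ) → ℝ} {h : ℝ}
  (X : Fin n → Ω → ℝ × ℝ) {Z : Fin n → Ω → (Fin p → ℝ)} {z : Fin p → ℝ} {ω : Ω}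

theorem nwWeight_nonneg (hK : ∀ u, 0 ≤ K u) (i : Fin n) : 0 ≤ nwWeight p n K h Z i z ω := by
  simp only [nwWeight, kh, ← Finset.mul_sum, mul_div_mul_comm]
  have ratio_nonneg : 0 ≤ (h ^ p)⁻¹ / (h ^ p)⁻¹ := by
    rcases eq_or_ne ((h ^ p)⁻¹) 0 with hc | hc <;> simp [hc]
  exact mul_nonneg ratio_nonneg (div_nonneg (hK _) (Finset.sum_nonneg fun _ _ => hK _))

theorem sum_nwWeight (hden : ∑ j, kh p K h (Z j ω - z) ≠ 0) :
    ∑ i, nwWeight p n K h Z i z ω = 1 := by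
  simp only [nwWeight, ← Finset.sum_div, div_self hden]

theorem sq_sum_nwWeight_sub_sum_sq (hden : ∑ j, kh p K h (Z j ω - z) ≠ 0) :
    (∑ i, nwWeight p n K h Z i z ω) ^ 2 - ∑ i, nwWeight p n K h Z i z ω ^ 2 =
      1 - sn p n K h Z z ω := by
  rw [sum_nwWeight hden, one_pow, sn]

theorem tauHat1_mem_Icc (hK : ∀ u, 0 ≤ K u) (hden : ∑ j, kh p K h (Z j ω - z) ≠ 0) :
    tauHat1 p n K h X Z z ω ∈ Set.Icc (-1) (1 - 2 * sn p n K h Z z ω) := by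
  let bothLT (i j : Fin n) : Prop := (X i ω).1 < (X j ω).1 ∧ (X i ω).2 < (X j ω).2
  have hw (i : Fin n) : 0 ≤ nwWeight p n K h Z i z ω := nwWeight_nonneg hK i
  have lower := weightedVStat_ite_nonneg hw bothLT
  have upper := two_mul_weightedVStat_le_of_asymm hw bothLT fun _ _ hij hji =>
    lt_asymm hij.1 hji.1
  rw [sq_sum_nwWeight_sub_sum_sq hden] at upper
  change 4 * weightedVStat _ (fun i j => if bothLT i j then 1 else 0) - 1 ∈ _
  constructor <;> linarith

theorem tauHat2_mem_Icc (hK : ∀ u, 0 ≤ K u) (hden : ∑ j, kh p K h (Z j ω - z) ≠ 0) :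
    tauHat2 p n K h X Z z ω ∈ Set.Icc (-1 + sn p n K h Z z ω) (1 - sn p n K h Z z ω) := by
  have abs_le_one_sub_sn : |tauHat2 p n K h X Z z ω| ≤ 1 - sn p n K h Z z ω := by
    rw [← sq_sum_nwWeight_sub_sum_sq hden]
    refine abs_weightedVStat_le (nwWeight_nonneg hK) (fun i => by simp) fun i j _ => ?_
    split_ifs <;> norm_num
  obtain ⟨lower, upper⟩ := abs_le.1 abs_le_one_sub_sn
  exact ⟨by linarith, upper⟩

theorem tauHat3_mem_Icc (hK : ∀ u, 0 ≤ K u) (hden : ∑ j, kh p K h (Z j ω - z) ≠ 0) :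
    tauHat3 p n K h X Z z ω ∈ Set.Icc (-1 + 2 * sn p n K h Z z ω) 1 := by
  let ltGT (i j : Fin n) : Prop := (X i ω).1 < (X j ω).1 ∧ (X j ω).2 < (X i ω).2
  have hw (i : Fin n) : 0 ≤ nwWeight p n K h Z i z ω := nwWeight_nonneg hK i
  have lower := weightedVStat_ite_nonneg hw ltGT
  have upper := two_mul_weightedVStat_le_of_asymm hw ltGT fun _ _ hij hji =>
    lt_asymm hij.1 hji.1
  rw [sq_sum_nwWeight_sub_sum_sq hden] at upper
  change 1 - 4 * weightedVStat _ (fun i j => if ltGT i j then 1 else 0) ∈ _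
  constructor <;> linarith

theorem tauHat_range_general (hK : ∀ u, 0 ≤ K u) (hden : ∑ j, kh p K h (Z j ω - z) ≠ 0) :
    tauHat1 p n K h X Z z ω ∈ Set.Icc (-1) (1 - 2 * sn p n K h Z z ω) ∧
    tauHat2 p n K h X Z z ω ∈ Set.Icc (-1 + sn p n K h Z z ω) (1 - sn p n K h Z z ω) ∧
    tauHat3 p n K h X Z z ω ∈ Set.Icc (-1 + 2 * sn p n K h Z z ω) 1 :=
  ⟨tauHat1_mem_Icc X hK hden, tauHat2_mem_Icc X hK hden, tauHat3_mem_Icc X hK hden⟩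

end Estimators

/-- almost surely, `τ̂⁽¹⁾ ∈ [−1, 1 − 2 s_n]`, `τ̂⁽²⁾ ∈ [−1 + s_n, 1 − s_n]`
and `τ̂⁽³⁾ ∈ [−1 + 2 s_n, 1]`. -/
theorem tauHat_range
    {Ω : Type*} [MeasurableSpace Ω] (P : Measure Ω) [IsProbabilityMeasure P]
    (p n : ℕ) (hn : 2 ≤ n) (K : (Fin p → ℝ) → ℝ) (hKnonneg : ∀ u, 0 ≤ K u)
    (h : ℝ) (hh : 0 < h)
    (X : Fin n → Ω → ℝ × ℝ) (Z : Fin n → Ω → (Fin p → ℝ)) (z : Fin p → ℝ)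
    -- the sample is i.i.d. from a continuous distribution: ties occur with probability 0
    (hties : ∀ᵐ ω ∂P, ∀ i j : Fin n, i ≠ j →
      (X i ω).1 ≠ (X j ω).1 ∧ (X i ω).2 ≠ (X j ω).2)
    -- the weights are well-defined: the denominator is positive
    (hden : ∀ᵐ ω ∂P, 0 < ∑ j : Fin n, kh p K h (Z j ω - z)) :
    ∀ᵐ ω ∂P,
      tauHat1 p n K h X Z z ω ∈ Set.Icc (-1 : ℝ) (1 - 2 * sn p n K h Z z ω) ∧
      tauHat2 p n K h X Z z ω ∈ Set.Icc (-1 + sn p n K h Z z ω) (1 - sn p n K h Z z ω) ∧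
      tauHat3 p n K h X Z z ω ∈ Set.Icc (-1 + 2 * sn p n K h Z z ω) (1 : ℝ) := by
  filter_upwards [hden] with ω hω using tauHat_range_general X hKnonneg hω.ne'
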